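/- arXiv:2406.15959 — 6 statements merged into one kernel-verified Lean document; each statement's English description precedes it below -/
import Mathlib

section
/- Let K be a real m×n matrix with KᵀK invertible, K⁺ := (KᵀK)⁻¹Kᵀ, A a real q×n matrix, B a real m×p matrix, and F ∈ ℝᵐ. If c ∈ ℝⁿ and u ∈ ℝᵖ satisfy KᵀK·c + KᵀB·u = Kᵀ·F and BᵀK·c + Bᵀ(I + K⁺ᵀAᵀA K⁺)B·u = Bᵀ(I + K⁺ᵀAᵀA K⁺)·F, then u satisfies the Schur complement system Bᵀ(I + K⁺ᵀAᵀA K⁺ − K·K⁺)B·u = Bᵀ(I + K⁺ᵀAᵀA K⁺ − K·K⁺)·F. -/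
open Matrix

theorem schurComplement_mulVec_eq {R k l r p : Type*} [Ring R] [Fintype k] [Fintype l] [Fintype p]
    [DecidableEq k] {D : Matrix l k R} {D' : Matrix k l R} {E : Matrix l p R} {C : Matrix r k R}
    {G : Matrix r p R} {x : k → R} {y : p → R} {f : l → R} {g : r → R}
    (hD : D' * D = 1) (h₁ : D *ᵥ x + E *ᵥ y = f) (h₂ : C *ᵥ x + G *ᵥ y = g) :
    (G - C * D' * E) *ᵥ y = g - (C * D') *ᵥ f := by
  have hx : D' *ᵥ f = x + (D' * E) *ᵥ y := by
    rw [← h₁, mulVec_add, mulVec_mulVec, mulVec_mulVec, hD, one_mulVec]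
  calc (G - C * D' * E) *ᵥ y
      = C *ᵥ x + G *ᵥ y - C *ᵥ (x + (D' * E) *ᵥ y) := by
        rw [sub_mulVec, mulVec_add, mulVec_mulVec, Matrix.mul_assoc]
        abel
    _ = g - (C * D') *ᵥ f := by rw [h₂, ← hx, mulVec_mulVec]

/-- `L`, `C` and `W` stand for `Kᵀ`, `Bᵀ` and `I + K⁺ᵀAᵀAK⁺`. -/
theorem stmt2_general {R m n r p : Type*} [CommRing R] [Fintype m] [Fintype n]
    [Fintype p] [DecidableEq n] {K : Matrix m n R} {L : Matrix n m R} (hLK : IsUnit (L * K))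
    {Kp : Matrix n m R} (hKp : Kp = (L * K)⁻¹ * L) {W : Matrix m m R} {B : Matrix m p R}
    {C : Matrix r m R} {F : m → R} {c : n → R} {u : p → R}
    (h₁ : (L * K) *ᵥ c + (L * B) *ᵥ u = L *ᵥ F)
    (h₂ : (C * K) *ᵥ c + (C * W * B) *ᵥ u = (C * W) *ᵥ F) :
    (C * (W - K * Kp) * B) *ᵥ u = (C * (W - K * Kp)) *ᵥ F := by
  have hinv : (L * K)⁻¹ * (L * K) = 1 :=
    nonsing_inv_mul _ ((isUnit_iff_isUnit_det _).1 hLK)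
  have hschur := schurComplement_mulVec_eq hinv h₁ h₂
  have hfactor : C * (W - K * Kp) = C * W - C * K * (L * K)⁻¹ * L := by
    simp only [hKp, Matrix.mul_sub, Matrix.mul_assoc]
  rw [hfactor, Matrix.sub_mul, sub_mulVec _ _ F]
  simpa only [mulVec_mulVec, Matrix.mul_assoc] using hschur

/-- if `(c, u)` satisfies the normal equations, then `u` satisfies the
Schur complement system `Bᵀ(I + K⁺ᵀAᵀAK⁺ − KK⁺)Bu = Bᵀ(I + K⁺ᵀAᵀAK⁺ − KK⁺)F`. -/
theorem stmt2 (m n q p : ℕ) (K : Matrix (Fin m) (Fin n) ℝ)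
    (hK : IsUnit (Kᵀ * K))
    (Kp : Matrix (Fin n) (Fin m) ℝ) (hKp : Kp = (Kᵀ * K)⁻¹ * Kᵀ)
    (A : Matrix (Fin q) (Fin n) ℝ) (B : Matrix (Fin m) (Fin p) ℝ)
    (F : Fin m → ℝ) (c : Fin n → ℝ) (u : Fin p → ℝ)
    (h1 : (Kᵀ * K) *ᵥ c + (Kᵀ * B) *ᵥ u = Kᵀ *ᵥ F)
    (h2 : (Bᵀ * K) *ᵥ c + (Bᵀ * (1 + Kpᵀ * Aᵀ * A * Kp) * B) *ᵥ u =
      (Bᵀ * (1 + Kpᵀ * Aᵀ * A * Kp)) *ᵥ F) :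
    (Bᵀ * (1 + Kpᵀ * Aᵀ * A * Kp - K * Kp) * B) *ᵥ u =
      (Bᵀ * (1 + Kpᵀ * Aᵀ * A * Kp - K * Kp)) *ᵥ F :=
  stmt2_general hK hKp h1 h2
end

section
/- Let K be a real m×n matrix with KᵀK invertible, K⁺ := (KᵀK)⁻¹Kᵀ, A a real q×n matrix, B a real m×p matrix, and F ∈ ℝᵐ. If u ∈ ℝᵖ satisfies the Schur complement system Bᵀ(I + K⁺ᵀAᵀA K⁺ − K·K⁺)B·u = Bᵀ(I + K⁺ᵀAᵀA K⁺ − K·K⁺)·F and c := K⁺·(F − B·u), then the pair (c, u) satisfies KᵀK·c + KᵀB·u = Kᵀ·F and BᵀK·c + Bᵀ(I + K⁺ᵀAᵀA K⁺)B·u = Bᵀ(I + K⁺ᵀAᵀA K⁺)·F. -/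
open Matrix

section BlockElimination

variable {R l m n p : Type*} [NonUnitalRing R] [Fintype m] [Fintype n] [Fintype p]
  {K : Matrix m n R} {G : Matrix n m R} {L : Matrix l m R} {B : Matrix m p R}

theorem mulVec_residual_add_mulVec_of_mul_mul_eq (hG : L * K * G = L) (F : m → R) (u : p → R) :
    (L * K) *ᵥ (G *ᵥ (F - B *ᵥ u)) + (L * B) *ᵥ u = L *ᵥ F := by
  rw [mulVec_mulVec, hG, mulVec_sub, mulVec_mulVec, sub_add_cancel]

theorem mulVec_residual_add_mulVec_eq_iff_schur (C : Matrix l m R) (W : Matrix m m R)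
    (F : m → R) (u : p → R) :
    (C * K) *ᵥ (G *ᵥ (F - B *ᵥ u)) + (C * W * B) *ᵥ u = (C * W) *ᵥ F ↔
      (C * (W - K * G) * B) *ᵥ u = (C * (W - K * G)) *ᵥ F := by
  have elimination : (C * K) *ᵥ (G *ᵥ (F - B *ᵥ u)) + (C * W * B) *ᵥ u - (C * W) *ᵥ F =
      (C * (W - K * G) * B) *ᵥ u - (C * (W - K * G)) *ᵥ F := by
    simp only [Matrix.mul_sub, Matrix.sub_mul, sub_mulVec, mulVec_sub, mulVec_mulVec,
      Matrix.mul_assoc]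
    abel
  rw [← sub_eq_zero, elimination, sub_eq_zero]

/-- Over `ℝ` and with `L = Kᵀ`, the condition `hG` says that `G *ᵥ F` is a least-squares solution of
`K *ᵥ c = F` for every `F`. -/
theorem stmt3_general {k : Type*} (hG : L * K * G = L) (C : Matrix k m R) (W : Matrix m m R)
    (F : m → R) (u : p → R) (c : n → R) (hc : c = G *ᵥ (F - B *ᵥ u)) :
    ((L * K) *ᵥ c + (L * B) *ᵥ u = L *ᵥ F ∧
      (C * K) *ᵥ c + (C * W * B) *ᵥ u = (C * W) *ᵥ F) ↔
      (C * (W - K * G) * B) *ᵥ u = (C * (W - K * G)) *ᵥ F := by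
  subst hc
  rw [and_iff_right (mulVec_residual_add_mulVec_of_mul_mul_eq hG F u),
    mulVec_residual_add_mulVec_eq_iff_schur]

end BlockElimination

/-- if `u` satisfies the Schur complement system and `c := K⁺(F − Bu)`,
then `(c, u)` satisfies the normal equations. -/
theorem stmt3 (m n q p : ℕ) (K : Matrix (Fin m) (Fin n) ℝ)
    (hK : IsUnit (Kᵀ * K))
    (Kp : Matrix (Fin n) (Fin m) ℝ) (hKp : Kp = (Kᵀ * K)⁻¹ * Kᵀ)
    (A : Matrix (Fin q) (Fin n) ℝ) (B : Matrix (Fin m) (Fin p) ℝ)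
    (F : Fin m → ℝ) (u : Fin p → ℝ)
    (hu : (Bᵀ * (1 + Kpᵀ * Aᵀ * A * Kp - K * Kp) * B) *ᵥ u =
      (Bᵀ * (1 + Kpᵀ * Aᵀ * A * Kp - K * Kp)) *ᵥ F)
    (c : Fin n → ℝ) (hc : c = Kp *ᵥ (F - B *ᵥ u)) :
    (Kᵀ * K) *ᵥ c + (Kᵀ * B) *ᵥ u = Kᵀ *ᵥ F ∧
    (Bᵀ * K) *ᵥ c + (Bᵀ * (1 + Kpᵀ * Aᵀ * A * Kp) * B) *ᵥ u =
      (Bᵀ * (1 + Kpᵀ * Aᵀ * A * Kp)) *ᵥ F := by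
  have gram_mul_pinv : Kᵀ * K * Kp = Kᵀ :=
    hKp ▸ mul_nonsing_inv_cancel_left _ _ ((isUnit_iff_isUnit_det _).1 hK)
  exact (stmt3_general gram_mul_pinv Bᵀ (1 + Kpᵀ * Aᵀ * A * Kp) F u c hc).2 hu
end

section
/- Let K be a real m×n matrix with KᵀK invertible, K⁺ := (KᵀK)⁻¹Kᵀ, A a real q×n matrix, and B a real m×p matrix. If the (m+q)×(n+p) block matrix [[K, B], [A, 0]] has full column rank (i.e., its kernel is trivial), then the Schur complement matrix S := Bᵀ·(I + K⁺ᵀAᵀA K⁺ − K·K⁺)·B is symmetric positive definite; in particular S is invertible. -/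
open Matrix

/-!
Write `M = [[K, B], [A, 0]]` and `T = [-K⁺B; 1]`. Then `M T = [(I - KK⁺)B; -AK⁺B]`, and since
`I - KK⁺` is an orthogonal projection, `S` is exactly the Gram matrix `(M T)ᵀ(M T)`. It is positive
definite because `M` and `T` are both injective.
-/

section

variable {l m n p q R : Type*}

theorem mulVec_injective_mul [Fintype m] [Fintype n] [NonUnitalSemiring R]
    {M : Matrix l m R} {N : Matrix m n R} (hM : Function.Injective M.mulVec)
    (hN : Function.Injective N.mulVec) :
    Function.Injective (M * N).mulVec := by
  intro v w hvw
  simp only [← mulVec_mulVec] at hvw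
  exact hN (hM hvw)

theorem mulVec_injective_fromRows_one [Fintype p] [DecidableEq p] [Semiring R]
    (X : Matrix n p R) : Function.Injective (fromRows X (1 : Matrix p p R)).mulVec := by
  intro v w hvw
  simp only [fromRows_mulVec, one_mulVec] at hvw
  exact (Sum.elim_eq_iff.1 hvw).2

theorem fromBlocks_zero_mul_fromRows_neg_mul_one [Fintype m] [Fintype n] [Fintype p]
    [DecidableEq m] [DecidableEq p] [Ring R] (K : Matrix m n R) (L : Matrix n m R)
    (A : Matrix q n R) (B : Matrix m p R) :
    fromBlocks K B A 0 * fromRows (-(L * B)) (1 : Matrix p p R) =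
      fromRows ((1 - K * L) * B) (-(A * L * B)) := by
  rw [fromBlocks_mul_fromRows, Matrix.sub_mul, Matrix.one_mul, Matrix.mul_one, Matrix.mul_neg,
    Matrix.mul_neg, Matrix.zero_mul, add_zero, neg_add_eq_sub, Matrix.mul_assoc K,
    Matrix.mul_assoc A]

theorem gram_fromRows_one_sub_mul [Fintype m] [Fintype q] [DecidableEq m] [Ring R] [StarRing R]
    {P : Matrix m m R} (hP : IsStarProjection P) (B : Matrix m p R) (C : Matrix q m R) :
    (fromRows ((1 - P) * B) (-(C * B)))ᴴ * fromRows ((1 - P) * B) (-(C * B)) =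
      Bᴴ * (1 + Cᴴ * C - P) * B := by
  have hproj : (1 - P)ᴴ * (1 - P) = 1 - P := by
    rw [← star_eq_conjTranspose, hP.one_sub.isSelfAdjoint.star_eq, hP.one_sub.isIdempotentElem.eq]
  calc
    _ = Bᴴ * ((1 - P)ᴴ * (1 - P)) * B + Bᴴ * (Cᴴ * C) * B := by
      simp only [conjTranspose_fromRows_eq_fromCols_conjTranspose, fromCols_mul_fromRows,
        conjTranspose_neg, conjTranspose_mul, Matrix.neg_mul, Matrix.mul_neg, neg_neg,
        Matrix.mul_assoc]
    _ = Bᴴ * (1 + Cᴴ * C - P) * B := by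
      rw [hproj, ← Matrix.add_mul, ← Matrix.mul_add, sub_add_eq_add_sub]

theorem isStarProjection_mul_inv_gram_mul_conjTranspose [Fintype m] [Fintype n] [DecidableEq n]
    [CommRing R] [StarRing R] {K : Matrix m n R} (hK : IsUnit (Kᴴ * K)) :
    IsStarProjection (K * ((Kᴴ * K)⁻¹ * Kᴴ)) where
  isIdempotentElem := by
    have hleft : (Kᴴ * K)⁻¹ * Kᴴ * K = 1 := by
      rw [Matrix.mul_assoc, nonsing_inv_mul _ ((isUnit_iff_isUnit_det _).1 hK)]
    rw [IsIdempotentElem, Matrix.mul_assoc, ← Matrix.mul_assoc _ K, hleft, Matrix.one_mul]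
  isSelfAdjoint := by
    have hinv : ((Kᴴ * K)⁻¹).IsHermitian := (isHermitian_conjTranspose_mul_self K).inv
    rw [← Matrix.mul_assoc]
    exact isHermitian_mul_mul_conjTranspose K hinv

theorem stmt6_general {𝕜 : Type*} [Fintype m] [Fintype n] [Fintype p] [Fintype q]
    [DecidableEq m] [DecidableEq p] [Field 𝕜] [PartialOrder 𝕜] [StarRing 𝕜] [StarOrderedRing 𝕜]
    {K : Matrix m n 𝕜} {L : Matrix n m 𝕜} (hKL : IsStarProjection (K * L))
    {A : Matrix q n 𝕜} {B : Matrix m p 𝕜}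
    (hfull : ∀ x : n ⊕ p → 𝕜, fromBlocks K B A 0 *ᵥ x = 0 → x = 0) :
    (Bᴴ * (1 + Lᴴ * Aᴴ * A * L - K * L) * B).PosDef ∧
      IsUnit (Bᴴ * (1 + Lᴴ * Aᴴ * A * L - K * L) * B) := by
  have hblock : Function.Injective (fromBlocks K B A 0).mulVec :=
    (injective_iff_map_eq_zero (fromBlocks K B A 0).mulVecLin).2 hfull
  have hgram := PosDef.conjTranspose_mul_self _
    (mulVec_injective_mul hblock (mulVec_injective_fromRows_one (-(L * B))))
  rw [fromBlocks_zero_mul_fromRows_neg_mul_one, gram_fromRows_one_sub_mul hKL, conjTranspose_mul,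
    ← Matrix.mul_assoc (Lᴴ * Aᴴ)] at hgram
  exact ⟨hgram, hgram.isUnit⟩

end

/-- if the block matrix `[[K, B], [A, 0]]` has full column rank (trivial
kernel), then `S := Bᵀ(I + K⁺ᵀAᵀAK⁺ − KK⁺)B` is symmetric positive definite; in
particular `S` is invertible. -/
theorem stmt6 (m n q p : ℕ) (K : Matrix (Fin m) (Fin n) ℝ)
    (hK : IsUnit (Kᵀ * K))
    (Kp : Matrix (Fin n) (Fin m) ℝ) (hKp : Kp = (Kᵀ * K)⁻¹ * Kᵀ)
    (A : Matrix (Fin q) (Fin n) ℝ) (B : Matrix (Fin m) (Fin p) ℝ)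
    (hfull : ∀ x : Fin n ⊕ Fin p → ℝ, fromBlocks K B A 0 *ᵥ x = 0 → x = 0)
    (S : Matrix (Fin p) (Fin p) ℝ)
    (hS : S = Bᵀ * (1 + Kpᵀ * Aᵀ * A * Kp - K * Kp) * B) :
    (S.IsSymm ∧ S.PosDef) ∧ IsUnit S := by
  subst hS hKp
  simp only [← conjTranspose_eq_transpose_of_trivial] at hK ⊢
  obtain ⟨hpos, hunit⟩ :=
    stmt6_general (isStarProjection_mul_inv_gram_mul_conjTranspose hK) hfull
  exact ⟨⟨(conjTranspose_eq_transpose_of_trivial _).symm.trans hpos.isHermitian, hpos⟩, hunit⟩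
end

section
/- Let K be a real m×n matrix with KᵀK invertible, K⁺ := (KᵀK)⁻¹Kᵀ, A a real q×n matrix, and B a real m×p matrix. If the block matrix [[K, B], [A, 0]] has full column rank, then the eliminated block matrix [[K, B], [0, −A·K⁺·B]] also has full column rank. -/
open Matrix

section Elimination

variable {R l m n o : Type*}

theorem fromBlocks_mulVec_eq_zero_iff [NonUnitalNonAssocSemiring R] [Fintype n] [Fintype o]
    {A : Matrix m n R} {B : Matrix m o R} {C : Matrix l n R} {D : Matrix l o R}
    {x : n ⊕ o → R} :
    fromBlocks A B C D *ᵥ x = 0 ↔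
      A *ᵥ (x ∘ Sum.inl) + B *ᵥ (x ∘ Sum.inr) = 0 ∧
        C *ᵥ (x ∘ Sum.inl) + D *ᵥ (x ∘ Sum.inr) = 0 := by
  rw [fromBlocks_mulVec, ← Sum.elim_zero_zero, Sum.elim_eq_iff]

theorem fromBlocks_zero_sub_mul_mulVec_eq_zero_iff [NonUnitalRing R]
    [Fintype m] [Fintype n] [Fintype o]
    (K : Matrix m n R) (B : Matrix m o R) (C : Matrix l m R) (D : Matrix l o R)
    (x : n ⊕ o → R) :
    fromBlocks K B 0 (D - C * B) *ᵥ x = 0 ↔ fromBlocks K B (C * K) D *ᵥ x = 0 := by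
  rw [fromBlocks_mulVec_eq_zero_iff, fromBlocks_mulVec_eq_zero_iff]
  refine and_congr_right fun first_row => ?_
  set u := x ∘ Sum.inl
  set v := x ∘ Sum.inr
  have second_row : (C * K) *ᵥ u + D *ᵥ v = 0 *ᵥ u + (D - C * B) *ᵥ v :=
    calc
      (C * K) *ᵥ u + D *ᵥ v = C *ᵥ (K *ᵥ u + B *ᵥ v) + (D - C * B) *ᵥ v := by
        rw [mulVec_add, mulVec_mulVec, mulVec_mulVec, sub_mulVec]
        abel
      _ = 0 *ᵥ u + (D - C * B) *ᵥ v := by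
        rw [first_row, mulVec_zero, zero_mulVec]
  rw [second_row]

theorem stmt7_general [NonUnitalRing R] [Fintype m] [Fintype n] [Fintype o]
    {K : Matrix m n R} {L : Matrix n m R} {A : Matrix l n R} (hA : A * L * K = A)
    (B : Matrix m o R) (D : Matrix l o R) :
    (∀ x : n ⊕ o → R, fromBlocks K B 0 (D - A * L * B) *ᵥ x = 0 → x = 0) ↔
      ∀ x : n ⊕ o → R, fromBlocks K B A D *ᵥ x = 0 → x = 0 := by
  simp only [fromBlocks_zero_sub_mul_mulVec_eq_zero_iff, hA]

end Elimination

theorem inv_mul_mul_eq_one_of_isUnit_mul {R m n : Type*} [CommRing R]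
    [Fintype m] [Fintype n] [DecidableEq n] {N : Matrix n m R} {K : Matrix m n R}
    (hNK : IsUnit (N * K)) : (N * K)⁻¹ * N * K = 1 := by
  rw [Matrix.mul_assoc, nonsing_inv_mul _ ((isUnit_iff_isUnit_det _).1 hNK)]

/-- if `[[K, B], [A, 0]]` has full column rank, then the eliminated block
matrix `[[K, B], [0, −AK⁺B]]` also has full column rank. -/
theorem stmt7 (m n q p : ℕ) (K : Matrix (Fin m) (Fin n) ℝ)
    (hK : IsUnit (Kᵀ * K))
    (Kp : Matrix (Fin n) (Fin m) ℝ) (hKp : Kp = (Kᵀ * K)⁻¹ * Kᵀ)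
    (A : Matrix (Fin q) (Fin n) ℝ) (B : Matrix (Fin m) (Fin p) ℝ)
    (hfull : ∀ x : Fin n ⊕ Fin p → ℝ, fromBlocks K B A 0 *ᵥ x = 0 → x = 0) :
    ∀ x : Fin n ⊕ Fin p → ℝ, fromBlocks K B 0 (-(A * Kp * B)) *ᵥ x = 0 → x = 0 := by
  have hA : A * Kp * K = A := by
    rw [Matrix.mul_assoc, hKp, inv_mul_mul_eq_one_of_isUnit_mul hK, Matrix.mul_one]
  simpa only [zero_sub] using (stmt7_general hA B 0).2 hfull
end

section
/- Correctness of the nonoverlapping DDM algorithm: Let K be a real m×n matrix with KᵀK invertible, K⁺ := (KᵀK)⁻¹Kᵀ, A a real q×n matrix, B a real m×p matrix, and F ∈ ℝᵐ, and suppose the block matrix [[K, B], [A, 0]] has full column rank. Then S := Bᵀ·(I + K⁺ᵀAᵀA K⁺ − K·K⁺)·B is invertible; setting u_Γ := S⁻¹·Bᵀ·(I + K⁺ᵀAᵀA K⁺ − K·K⁺)·F and c := K⁺·(F − B·u_Γ), the pair (c, u_Γ) is the unique solution of the system KᵀK·c + KᵀB·u = Kᵀ·F, BᵀK·c + Bᵀ(I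 + K⁺ᵀAᵀA K⁺)B·u = Bᵀ(I + K⁺ᵀAᵀA K⁺)·F. -/
open Matrix

/-!
Solving the first equation for `c` gives `c = K⁺ (F - B u)`, and substituting this into the second
one leaves `S u = Bᴴ (I + K⁺ᴴ Aᴴ A K⁺ - K K⁺) F`. Since `I - K K⁺` is an orthogonal projection,
`S` is the Gram matrix of `[[K, B], [A, 0]] * [-K⁺ B; I]`, a product of two matrices of full column
rank; hence `S` is positive definite.
-/

section BlockElimination

theorem schur_mulVec_eq_iff {R k l m n p : Type*} [Ring R] [Fintype l] [Fintype m] [Fintype n]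
    [Fintype p] (K : Matrix l n R) (G : Matrix n m R) (C : Matrix k l R) (W : Matrix l m R)
    (B : Matrix m p R) (F : m → R) (u : p → R) :
    (C * (W - K * G) * B) *ᵥ u = C *ᵥ ((W - K * G) *ᵥ F) ↔
      (C * K) *ᵥ (G *ᵥ (F - B *ᵥ u)) + (C * W * B) *ᵥ u = (C * W) *ᵥ F := by
  rw [← sub_eq_zero, ← sub_eq_zero (b := (C * W) *ᵥ F)]
  refine Eq.congr_left ?_
  simp only [Matrix.mul_assoc, ← mulVec_mulVec, mulVec_sub, sub_mulVec]
  abel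

variable {R m n p : Type*} [CommRing R] [Fintype m] [Fintype n] [Fintype p]

theorem mulVec_eq_iff_eq_inv_mulVec [DecidableEq n] {M : Matrix n n R} (hM : IsUnit M)
    (x b : n → R) : M *ᵥ x = b ↔ x = M⁻¹ *ᵥ b := by
  have hdet : IsUnit M.det := M.isUnit_iff_isUnit_det.1 hM
  constructor
  · rintro rfl
    rw [mulVec_mulVec, nonsing_inv_mul _ hdet, one_mulVec]
  · rintro rfl
    rw [mulVec_mulVec, mul_nonsing_inv _ hdet, one_mulVec]

theorem mulVec_add_mulVec_eq_iff_eq_inv_mulVec_sub [DecidableEq n] {L : Matrix n m R}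
    {K : Matrix m n R} (hLK : IsUnit (L * K)) (B : Matrix m p R) (F : m → R)
    (c : n → R) (u : p → R) :
    (L * K) *ᵥ c + (L * B) *ᵥ u = L *ᵥ F ↔ c = ((L * K)⁻¹ * L) *ᵥ (F - B *ᵥ u) := by
  rw [← eq_sub_iff_add_eq, ← mulVec_mulVec u L B, ← mulVec_sub,
    mulVec_eq_iff_eq_inv_mulVec hLK, mulVec_mulVec]

theorem block_system_iff_of_isUnit_schur [DecidableEq n] [DecidableEq p] {L : Matrix n m R}
    {K : Matrix m n R} (hLK : IsUnit (L * K)) {C : Matrix p m R} {W : Matrix m m R}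
    {B : Matrix m p R} (hS : IsUnit (C * (W - K * ((L * K)⁻¹ * L)) * B)) (F : m → R)
    (c : n → R) (u : p → R) :
    ((L * K) *ᵥ c + (L * B) *ᵥ u = L *ᵥ F ∧ (C * K) *ᵥ c + (C * W * B) *ᵥ u = (C * W) *ᵥ F) ↔
      c = ((L * K)⁻¹ * L) *ᵥ (F - B *ᵥ u) ∧
        u = (C * (W - K * ((L * K)⁻¹ * L)) * B)⁻¹ *ᵥ
          (C *ᵥ ((W - K * ((L * K)⁻¹ * L)) *ᵥ F)) := by
  rw [mulVec_add_mulVec_eq_iff_eq_inv_mulVec_sub hLK, ← mulVec_eq_iff_eq_inv_mulVec hS]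
  refine and_congr_right fun hc => ?_
  rw [hc, schur_mulVec_eq_iff]

end BlockElimination

section Pseudoinverse

variable {R m n : Type*} [CommRing R] [StarRing R] [Fintype m] [Fintype n] [DecidableEq n]

/-- The Moore–Penrose pseudoinverse `(Kᴴ K)⁻¹ Kᴴ` of a matrix `K` of full column rank. When `Kᴴ K`
is not invertible, its inverse, and hence `pinv K`, is `0` by convention. -/
noncomputable def pinv (K : Matrix m n R) : Matrix n m R :=
  (Kᴴ * K)⁻¹ * Kᴴ

variable {K : Matrix m n R}

theorem pinv_mul_self (hK : IsUnit (Kᴴ * K)) : pinv K * K = 1 := by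
  rw [pinv, Matrix.mul_assoc, nonsing_inv_mul _ ((isUnit_iff_isUnit_det _).1 hK)]

theorem isHermitian_self_mul_pinv (K : Matrix m n R) : (K * pinv K).IsHermitian := by
  rw [pinv, ← Matrix.mul_assoc]
  exact isHermitian_mul_mul_conjTranspose K (isHermitian_conjTranspose_mul_self K).inv

theorem isStarProjection_self_mul_pinv (hK : IsUnit (Kᴴ * K)) : IsStarProjection (K * pinv K) where
  isIdempotentElem := by
    rw [IsIdempotentElem, Matrix.mul_assoc, ← Matrix.mul_assoc (pinv K), pinv_mul_self hK,
      Matrix.one_mul]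
  isSelfAdjoint := isHermitian_self_mul_pinv K

theorem conjTranspose_mul_self_one_sub_self_mul_pinv [DecidableEq m] (hK : IsUnit (Kᴴ * K)) :
    (1 - K * pinv K)ᴴ * (1 - K * pinv K) = 1 - K * pinv K := by
  have hproj := (isStarProjection_self_mul_pinv hK).one_sub
  rw [← star_eq_conjTranspose, hproj.isSelfAdjoint.star_eq, hproj.isIdempotentElem.eq]

end Pseudoinverse

section InterfaceMatrix

theorem mulVec_fromRows_one_injective {R n p : Type*} [Semiring R] [Fintype p] [DecidableEq p]
    (X : Matrix n p R) :
    Function.Injective (fromRows X (1 : Matrix p p R)).mulVec := by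
  intro u v huv
  simpa only [fromRows_mulVec, Sum.elim_comp_inr, one_mulVec] using congrArg (· ∘ Sum.inr) huv

theorem fromBlocks_mul_fromRows_neg_mul {R m n q p : Type*} [Ring R] [Fintype m] [Fintype n]
    [Fintype p] [DecidableEq m] [DecidableEq p] (K : Matrix m n R) (G : Matrix n m R)
    (A : Matrix q n R) (B : Matrix m p R) :
    fromBlocks K B A 0 * fromRows (-(G * B)) (1 : Matrix p p R) =
      fromRows ((1 - K * G) * B) (-(A * G * B)) := by
  rw [fromBlocks_mul_fromRows]
  congr 1
  · rw [Matrix.mul_neg, Matrix.mul_one, Matrix.sub_mul, Matrix.one_mul, Matrix.mul_assoc,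
      neg_add_eq_sub]
  · rw [Matrix.mul_neg, Matrix.zero_mul, add_zero, Matrix.mul_assoc]

variable {R m n q p : Type*} [CommRing R] [StarRing R] [Fintype m] [Fintype n] [Fintype q]
  [Fintype p] [DecidableEq m] [DecidableEq n] {K : Matrix m n R}

theorem gram_fromBlocks_mul_fromRows_neg_pinv_mul [DecidableEq p] (hK : IsUnit (Kᴴ * K))
    (A : Matrix q n R) (B : Matrix m p R) :
    (fromBlocks K B A 0 * fromRows (-(pinv K * B)) (1 : Matrix p p R))ᴴ *
        (fromBlocks K B A 0 * fromRows (-(pinv K * B)) (1 : Matrix p p R)) =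
      Bᴴ * (1 + (pinv K)ᴴ * Aᴴ * A * pinv K - K * pinv K) * B := by
  rw [fromBlocks_mul_fromRows_neg_mul, conjTranspose_fromRows_eq_fromCols_conjTranspose,
    fromCols_mul_fromRows]
  calc ((1 - K * pinv K) * B)ᴴ * ((1 - K * pinv K) * B) +
        (-(A * pinv K * B))ᴴ * -(A * pinv K * B)
      = Bᴴ * ((1 - K * pinv K)ᴴ * (1 - K * pinv K) + (pinv K)ᴴ * Aᴴ * A * pinv K) * B := by
        simp only [conjTranspose_mul, conjTranspose_neg, Matrix.neg_mul, Matrix.mul_neg, neg_neg,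
          Matrix.mul_add, Matrix.add_mul, Matrix.mul_assoc]
    _ = Bᴴ * (1 + (pinv K)ᴴ * Aᴴ * A * pinv K - K * pinv K) * B := by
        rw [conjTranspose_mul_self_one_sub_self_mul_pinv hK, sub_add_eq_add_sub]

theorem posDef_interface_of_injective_fromBlocks [NoZeroDivisors R] [PartialOrder R]
    [StarOrderedRing R] (hK : IsUnit (Kᴴ * K)) {A : Matrix q n R} {B : Matrix m p R}
    (hfull : Function.Injective (fromBlocks K B A 0).mulVec) :
    (Bᴴ * (1 + (pinv K)ᴴ * Aᴴ * A * pinv K - K * pinv K) * B).PosDef := by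
  classical
  rw [← gram_fromBlocks_mul_fromRows_neg_pinv_mul hK]
  refine PosDef.conjTranspose_mul_self _ ?_
  simpa only [Function.comp_def, mulVec_mulVec] using
    hfull.comp (mulVec_fromRows_one_injective (-(pinv K * B)))

end InterfaceMatrix

theorem stmt8_general {𝕜 m n q p : Type*} [Field 𝕜] [PartialOrder 𝕜] [StarRing 𝕜]
    [StarOrderedRing 𝕜] [Fintype m] [Fintype n] [Fintype q] [Fintype p] [DecidableEq m]
    [DecidableEq n] [DecidableEq p] {K : Matrix m n 𝕜} (hK : IsUnit (Kᴴ * K))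
    {Kp : Matrix n m 𝕜} (hKp : Kp = (Kᴴ * K)⁻¹ * Kᴴ) {A : Matrix q n 𝕜} {B : Matrix m p 𝕜}
    (F : m → 𝕜) (hfull : ∀ x : n ⊕ p → 𝕜, fromBlocks K B A 0 *ᵥ x = 0 → x = 0)
    {S : Matrix p p 𝕜} (hS : S = Bᴴ * (1 + Kpᴴ * Aᴴ * A * Kp - K * Kp) * B)
    {uΓ : p → 𝕜} (huΓ : uΓ = S⁻¹ *ᵥ (Bᴴ *ᵥ ((1 + Kpᴴ * Aᴴ * A * Kp - K * Kp) *ᵥ F)))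
    {c : n → 𝕜} (hc : c = Kp *ᵥ (F - B *ᵥ uΓ)) :
    IsUnit S ∧
    ((Kᴴ * K) *ᵥ c + (Kᴴ * B) *ᵥ uΓ = Kᴴ *ᵥ F ∧
     (Bᴴ * K) *ᵥ c + (Bᴴ * (1 + Kpᴴ * Aᴴ * A * Kp) * B) *ᵥ uΓ =
       (Bᴴ * (1 + Kpᴴ * Aᴴ * A * Kp)) *ᵥ F) ∧
    ∀ (c' : n → 𝕜) (u' : p → 𝕜),
      ((Kᴴ * K) *ᵥ c' + (Kᴴ * B) *ᵥ u' = Kᴴ *ᵥ F ∧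
       (Bᴴ * K) *ᵥ c' + (Bᴴ * (1 + Kpᴴ * Aᴴ * A * Kp) * B) *ᵥ u' =
         (Bᴴ * (1 + Kpᴴ * Aᴴ * A * Kp)) *ᵥ F) →
      c' = c ∧ u' = uΓ := by
  have hinj : Function.Injective (fromBlocks K B A 0).mulVec :=
    (injective_iff_map_eq_zero (fromBlocks K B A 0).mulVecLin).2 hfull
  subst hKp hS
  have hS_unit := (posDef_interface_of_injective_fromBlocks hK hinj).isUnit
  have hsystem := block_system_iff_of_isUnit_schur hK hS_unit F
  refine ⟨hS_unit, (hsystem c uΓ).2 ⟨hc, huΓ⟩, fun c' u' hsol => ?_⟩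
  obtain ⟨hc', hu'⟩ := (hsystem c' u').1 hsol
  have hu : u' = uΓ := hu'.trans huΓ.symm
  exact ⟨by rw [hc', hc, hu], hu⟩

/-- correctness of the nonoverlapping DDM algorithm. If `[[K, B], [A, 0]]`
has full column rank, then `S := Bᵀ(I + K⁺ᵀAᵀAK⁺ − KK⁺)B` is invertible, and with
`u_Γ := S⁻¹Bᵀ(I + K⁺ᵀAᵀAK⁺ − KK⁺)F` and `c := K⁺(F − Bu_Γ)`, the pair `(c, u_Γ)` is
the unique solution of the normal equations. -/
theorem stmt8 (m n q p : ℕ) (K : Matrix (Fin m) (Fin n) ℝ)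
    (hK : IsUnit (Kᵀ * K))
    (Kp : Matrix (Fin n) (Fin m) ℝ) (hKp : Kp = (Kᵀ * K)⁻¹ * Kᵀ)
    (A : Matrix (Fin q) (Fin n) ℝ) (B : Matrix (Fin m) (Fin p) ℝ)
    (F : Fin m → ℝ)
    (hfull : ∀ x : Fin n ⊕ Fin p → ℝ, fromBlocks K B A 0 *ᵥ x = 0 → x = 0)
    (S : Matrix (Fin p) (Fin p) ℝ)
    (hS : S = Bᵀ * (1 + Kpᵀ * Aᵀ * A * Kp - K * Kp) * B)
    (uΓ : Fin p → ℝ)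
    (huΓ : uΓ = S⁻¹ *ᵥ (Bᵀ *ᵥ ((1 + Kpᵀ * Aᵀ * A * Kp - K * Kp) *ᵥ F)))
    (c : Fin n → ℝ) (hc : c = Kp *ᵥ (F - B *ᵥ uΓ)) :
    IsUnit S ∧
    ((Kᵀ * K) *ᵥ c + (Kᵀ * B) *ᵥ uΓ = Kᵀ *ᵥ F ∧
     (Bᵀ * K) *ᵥ c + (Bᵀ * (1 + Kpᵀ * Aᵀ * A * Kp) * B) *ᵥ uΓ =
       (Bᵀ * (1 + Kpᵀ * Aᵀ * A * Kp)) *ᵥ F) ∧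
    ∀ (c' : Fin n → ℝ) (u' : Fin p → ℝ),
      ((Kᵀ * K) *ᵥ c' + (Kᵀ * B) *ᵥ u' = Kᵀ *ᵥ F ∧
       (Bᵀ * K) *ᵥ c' + (Bᵀ * (1 + Kpᵀ * Aᵀ * A * Kp) * B) *ᵥ u' =
         (Bᵀ * (1 + Kpᵀ * Aᵀ * A * Kp)) *ᵥ F) →
      c' = c ∧ u' = uΓ := by
  simp only [← conjTranspose_eq_transpose_of_trivial] at *
  exact stmt8_general hK hKp F hfull hS huΓ hc
end

section
/- Deterministic core of the Proposition: For s = 1, …, N, let Kˢ be a real mˢ×nˢ matrix whose rows are partitioned into an 'interior' index set Rˢ and its complement, and let Bˢ be a real mˢ×p matrix whose rows indexed by Rˢ are all zero. Let K := diag(K¹, …, Kᴺ) be the block diagonal matrix, let B be the matrix obtained by stacking B¹, …, Bᴺ vertically, and let A be any real q×(n¹+⋯+nᴺ) matrix. If for each s the submatrix of Kˢ consisting of the rows indexed by Rˢ has full column rank, and the stacked matrix B has full column rank, then the block matrix [[K, B], [A, 0]] has full column rank. -/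
open Matrix

/-- `M` has full column rank, encoded as triviality of the kernel of `v ↦ M *ᵥ v` so that the
notion makes sense over arbitrary coefficients. -/
def FullColumnRank {m n α : Type*} [Fintype n] [NonUnitalNonAssocSemiring α]
    (M : Matrix m n α) : Prop :=
  ∀ v : n → α, M *ᵥ v = 0 → v = 0

section RowSelection

variable {l m n p q α : Type*} [Fintype n] [NonUnitalNonAssocSemiring α]

theorem submatrix_rows_mulVec (M : Matrix m n α) (r : l → m) (v : n → α) :
    M.submatrix r id *ᵥ v = (M *ᵥ v) ∘ r :=
  rfl

/-- The rows selected by `r` do not see `B`, so they alone force the first component of a kernel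
vector to vanish; its second component is then in the kernel of `B`. -/
theorem FullColumnRank.fromBlocks_of_submatrix_rows [Fintype p] {K : Matrix m n α}
    {B : Matrix m p α} (A : Matrix q n α) (D : Matrix q p α) (r : l → m)
    (hK : FullColumnRank (K.submatrix r id)) (hBr : B.submatrix r id = 0)
    (hB : FullColumnRank B) : FullColumnRank (fromBlocks K B A D) := by
  intro x hx
  have hupper : K *ᵥ (x ∘ Sum.inl) + B *ᵥ (x ∘ Sum.inr) = 0 := by
    rw [fromBlocks_mulVec] at hx
    exact congrArg (· ∘ Sum.inl) hx
  have hBr_mulVec : (B *ᵥ (x ∘ Sum.inr)) ∘ r = 0 := by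
    rw [← submatrix_rows_mulVec, hBr, zero_mulVec]
  have hinl : x ∘ Sum.inl = 0 := by
    refine hK _ ?_
    calc K.submatrix r id *ᵥ (x ∘ Sum.inl)
        = (K *ᵥ (x ∘ Sum.inl)) ∘ r + (B *ᵥ (x ∘ Sum.inr)) ∘ r := by
          rw [hBr_mulVec, add_zero, submatrix_rows_mulVec]
      _ = (K *ᵥ (x ∘ Sum.inl) + B *ᵥ (x ∘ Sum.inr)) ∘ r := (Pi.add_comp _ _ _).symm
      _ = 0 := by rw [hupper, Pi.zero_comp]
  have hinr : x ∘ Sum.inr = 0 := hB _ (by simpa only [hinl, mulVec_zero, zero_add] using hupper)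
  rw [← Sum.elim_comp_inl_inr x, hinl, hinr, Sum.elim_zero_zero]

end RowSelection

section BlockDiagonal

variable {ι α : Type*} {l m n : ι → Type*} [DecidableEq ι]

theorem submatrix_sigmaMap_blockDiagonal' [Zero α] (K : ∀ s, Matrix (m s) (n s) α)
    (r : ∀ s, l s → m s) :
    (blockDiagonal' K).submatrix (Sigma.map id r) id =
      blockDiagonal' fun s ↦ (K s).submatrix (r s) id :=
  rfl

variable [Fintype ι] [∀ s, Fintype (n s)] [NonUnitalNonAssocSemiring α]

theorem blockDiagonal'_mulVec_apply (K : ∀ s, Matrix (m s) (n s) α) (v : (Σ s, n s) → α)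
    (s : ι) (i : m s) : (blockDiagonal' K *ᵥ v) ⟨s, i⟩ = (K s *ᵥ fun j ↦ v ⟨s, j⟩) i := by
  simp only [mulVec, dotProduct, Fintype.sum_sigma]
  rw [Fintype.sum_eq_single s]
  · simp only [blockDiagonal'_apply_eq]
  · intro t hts
    simp only [blockDiagonal'_apply_ne K _ _ hts.symm, zero_mul, Finset.sum_const_zero]

theorem fullColumnRank_blockDiagonal' {K : ∀ s, Matrix (m s) (n s) α}
    (hK : ∀ s, FullColumnRank (K s)) : FullColumnRank (blockDiagonal' K) := by
  intro v hv
  have hblock (s : ι) : (fun j ↦ v ⟨s, j⟩) = 0 := by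
    refine hK s _ (funext fun i ↦ ?_)
    rw [← blockDiagonal'_mulVec_apply, hv, Pi.zero_apply, Pi.zero_apply]
  exact funext fun ⟨s, j⟩ ↦ congrFun (hblock s) j

theorem stmt9_general {p q : Type*} [Fintype p] {K : ∀ s, Matrix (m s) (n s) α}
    {B : Matrix (Σ s, m s) p α} (A : Matrix q (Σ s, n s) α) (D : Matrix q p α)
    (r : ∀ s, l s → m s) (hBr : B.submatrix (Sigma.map id r) id = 0)
    (hK : ∀ s, FullColumnRank ((K s).submatrix (r s) id)) (hB : FullColumnRank B) :
    FullColumnRank (fromBlocks (blockDiagonal' K) B A D) := by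
  have hKr : FullColumnRank ((blockDiagonal' K).submatrix (Sigma.map id r) id) := by
    rw [submatrix_sigmaMap_blockDiagonal']
    exact fullColumnRank_blockDiagonal' hK
  exact hKr.fromBlocks_of_submatrix_rows A D _ hBr hB

end BlockDiagonal

/-- deterministic core of the Proposition. If each row-submatrix of `Kˢ`
on the interior rows `Rˢ` has full column rank, the rows of `Bˢ` indexed by `Rˢ`
vanish, and the vertically stacked matrix `B` has full column rank, then the block
matrix `[[diag(K¹,…,Kᴺ), B], [A, 0]]` has full column rank. -/
theorem stmt9 (N q p : ℕ) (m n : Fin N → ℕ)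
    (K : ∀ s, Matrix (Fin (m s)) (Fin (n s)) ℝ)
    (B : ∀ s, Matrix (Fin (m s)) (Fin p) ℝ)
    (R : ∀ s, Set (Fin (m s)))
    (A : Matrix (Fin q) ((s : Fin N) × Fin (n s)) ℝ)
    (hB0 : ∀ s, ∀ i ∈ R s, ∀ j, B s i j = 0)
    (hKfull : ∀ s, ∀ v : Fin (n s) → ℝ, (∀ i ∈ R s, (K s *ᵥ v) i = 0) → v = 0)
    (hBfull : ∀ w : Fin p → ℝ,
      (Matrix.of fun (i : (s : Fin N) × Fin (m s)) j => B i.1 i.2 j) *ᵥ w = 0 → w = 0) :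
    ∀ x : ((s : Fin N) × Fin (n s)) ⊕ Fin p → ℝ,
      fromBlocks (Matrix.blockDiagonal' K)
          (Matrix.of fun (i : (s : Fin N) × Fin (m s)) j => B i.1 i.2 j) A 0 *ᵥ x = 0 →
        x = 0 := by
  exact stmt9_general A 0 (fun s (i : R s) ↦ (i : Fin (m s)))
    (Matrix.ext fun i j ↦ hB0 i.1 i.2 i.2.2 j)
    (fun s v hv ↦ hKfull s v fun i hi ↦ congrFun hv ⟨i, hi⟩) hBfull
end
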